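/- Let Y be an exponential random variable with rate 1 and let X be a nonnegative real random variable independent of Y; let C > 0 be real. Define erfc(x) = (2/√π) ∫_x^∞ e^{−t²} dt. Then E[ erfc( √( Y / (X + C) ) ) ] = 1 − (1/√π) ∫_0^∞ z^{−1/2} e^{−z(1 + C)} E[e^{−z X}] dz. -/

import Mathlib

/-!
Both sides equal `1 - E[1 / √(1 + C + X)]`.

On the left, condition on `X` and put `a = X + C`. Since `√(y / a) ≤ t ↔ y ≤ a t²` for `t ≥ 0`,
exchanging the expectation over `Y` with the integral defining `erfc` produces the exponential
distribution function `1 - e^{-a t²}`, so that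
`E[erfc √(Y / a)] = (2/√π) ∫_0^∞ e^{-t²} (1 - e^{-a t²}) dt = 1 - 1/√(1 + a)`
by two Gaussian integrals (`integral_erfc_sqrt_div`).

On the right, Fubini moves the expectation outside, and the remaining integral
`∫_0^∞ z^{-1/2} e^{-b z} dz = √π / √b` is a Gamma integral (`integral_rpow_neg_half_mul_exp`).
-/

open MeasureTheory ProbabilityTheory Real

/-- The complementary error function `erfc x = (2/√π) ∫_x^∞ e^{−t²} dt`. -/
noncomputable def erfc (x : ℝ) : ℝ :=
  (2 / Real.sqrt π) * ∫ t in Set.Ioi x, Real.exp (-t ^ 2)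

lemma integrable_exp_neg_sq : Integrable (fun t : ℝ => Real.exp (-t ^ 2)) := by
  simpa using integrable_exp_neg_mul_sq one_pos

lemma erfc_antitone : Antitone erfc := by
  intro x y hxy
  unfold erfc
  refine mul_le_mul_of_nonneg_left ?_ (by positivity)
  exact setIntegral_mono_set integrable_exp_neg_sq.integrableOn
    (Filter.Eventually.of_forall fun t => (Real.exp_pos _).le)
    (Set.Ioi_subset_Ioi hxy).eventuallyLE

lemma erfc_nonneg (x : ℝ) : 0 ≤ erfc x :=
  mul_nonneg (by positivity) (integral_nonneg fun t => (Real.exp_pos _).le)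

lemma erfc_zero : erfc 0 = 1 := by
  have h := integral_gaussian_Ioi 1
  simp only [neg_mul, one_mul, div_one] at h
  have hp : √π ≠ 0 := by positivity
  rw [erfc, h]
  field_simp

lemma erfc_sqrt_le_one (x : ℝ) : erfc √x ≤ 1 :=
  erfc_zero ▸ erfc_antitone (Real.sqrt_nonneg x)

/-- The integral defining `erfc √(y / a)`, written over the fixed domain `t > 0`. -/
lemma erfc_sqrt_div_eq {a : ℝ} (ha : 0 < a) (y : ℝ) :
    erfc √(y / a) = (2 / √π) *
      ∫ t in Set.Ioi (0:ℝ), Real.exp (-t ^ 2) * (Set.Iic (a * t ^ 2)).indicator 1 y := by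
  rw [erfc, ← integral_Ici_eq_integral_Ioi, ← integral_Ici_eq_integral_Ioi,
    ← integral_indicator measurableSet_Ici, ← integral_indicator measurableSet_Ici]
  congr 2
  ext t
  by_cases ht : 0 ≤ t
  · have h : √(y / a) ≤ t ↔ y ≤ a * t ^ 2 := by
      rw [Real.sqrt_le_left ht, div_le_iff₀' ha]
    by_cases h' : y ≤ a * t ^ 2 <;> simp [Set.indicator, ht, h, h']
  · have h : ¬ √(y / a) ≤ t := fun h => ht ((Real.sqrt_nonneg _).trans h)
    simp [Set.indicator, ht, h]

lemma integral_erfc_sqrt_div {a : ℝ} (ha : 0 < a) :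
    ∫ y, erfc √(y / a) ∂(expMeasure 1) = 1 - 1 / √(1 + a) := by
  have := isProbabilityMeasure_expMeasure one_pos
  have hcdf (t : ℝ) :
      ∫ y, Real.exp (-t ^ 2) * (Set.Iic (a * t ^ 2)).indicator 1 y ∂(expMeasure 1) =
        Real.exp (-1 * t ^ 2) - Real.exp (-(1 + a) * t ^ 2) := by
    rw [integral_const_mul, integral_indicator_one measurableSet_Iic, ← cdf_eq_real,
      cdf_expMeasure_eq one_pos, if_pos (by positivity), mul_sub, ← Real.exp_add]
    ring_nf
  have hint : Integrable (Function.uncurry fun y t : ℝ =>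
      Real.exp (-t ^ 2) * (Set.Iic (a * t ^ 2)).indicator (1 : ℝ → ℝ) y)
      ((expMeasure 1).prod (volume.restrict (Set.Ioi (0:ℝ)))) := by
    have h := (integrable_const (1:ℝ)).mul_prod (μ := expMeasure 1)
      (integrable_exp_neg_sq.integrableOn (s := Set.Ioi (0:ℝ)))
    have hS : MeasurableSet {p : ℝ × ℝ | p.1 ≤ a * p.2 ^ 2} :=
      measurableSet_le (by fun_prop) (by fun_prop)
    refine (h.indicator hS).congr (Filter.Eventually.of_forall fun p => ?_)
    by_cases hp : p.1 ≤ a * p.2 ^ 2 <;> simp [Set.indicator, Function.uncurry, hp]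
  simp_rw [erfc_sqrt_div_eq ha]
  rw [integral_const_mul, integral_integral_swap hint]
  simp_rw [hcdf]
  rw [integral_sub (integrable_exp_neg_mul_sq one_pos).integrableOn
    (integrable_exp_neg_mul_sq (by positivity)).integrableOn,
    integral_gaussian_Ioi, integral_gaussian_Ioi, div_one, Real.sqrt_div pi_pos.le]
  have hp : √π ≠ 0 := by positivity
  field_simp

lemma integral_rpow_neg_half_mul_exp {b : ℝ} (hb : 0 < b) :
    ∫ z in Set.Ioi (0:ℝ), z ^ (-(1/2) : ℝ) * Real.exp (-(b * z)) = √π * (1 / √b) := by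
  have h := Real.integral_rpow_mul_exp_neg_mul_Ioi (a := 1/2) (by norm_num) hb
  rw [show (1/2 - 1 : ℝ) = -(1/2) by norm_num] at h
  rw [h, Real.Gamma_one_half_eq, ← Real.sqrt_eq_rpow, Real.sqrt_div zero_le_one, Real.sqrt_one,
    mul_comm]

/-- Hamdi's lemma (`m = 1` case): for `Y` unit-rate exponential, `X ≥ 0` independent of
`Y`, and `C > 0`,
`E[erfc(√(Y/(X+C)))] = 1 − (1/√π) ∫_0^∞ z^{−1/2} e^{−z(1+C)} E[e^{−zX}] dz`. -/
theorem stmt9 {Ω : Type*} [MeasurableSpace Ω] (μ : Measure Ω) [IsProbabilityMeasure μ]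
    (Y X : Ω → ℝ) (hY : Measurable Y) (hX : Measurable X)
    (hYexp : μ.map Y = expMeasure 1)
    (hXnonneg : ∀ ω, 0 ≤ X ω)
    (hindep : IndepFun Y X μ)
    (C : ℝ) (hC : 0 < C) :
    ∫ ω, erfc (Real.sqrt (Y ω / (X ω + C))) ∂μ =
      1 - (1 / Real.sqrt π) * ∫ z in Set.Ioi (0:ℝ),
        z ^ (-(1/2) : ℝ) * Real.exp (-z * (1 + C)) * ∫ ω, Real.exp (-z * X ω) ∂μ := by
  have := isProbabilityMeasure_expMeasure one_pos
  have := Measure.isProbabilityMeasure_map (μ := μ) hX.aemeasurable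
  have hpos (ω : Ω) : 0 < X ω + C := add_pos_of_nonneg_of_pos (hXnonneg ω) hC
  have hlhs : ∫ ω, erfc √(Y ω / (X ω + C)) ∂μ = ∫ ω, (1 - 1 / √(1 + (X ω + C))) ∂μ := by
    have hmeas : Measurable fun p : ℝ × ℝ => erfc √(p.1 / (p.2 + C)) :=
      erfc_antitone.measurable.comp (by fun_prop)
    have hprod := hindep.map_prod_eq_prod_map_map hY.aemeasurable hX.aemeasurable
    rw [hYexp] at hprod
    have hint : Integrable (fun p : ℝ × ℝ => erfc √(p.1 / (p.2 + C)))
        ((expMeasure 1).prod (μ.map X)) :=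
      Integrable.of_bound hmeas.aestronglyMeasurable 1 (Filter.Eventually.of_forall fun p => by
        rw [Real.norm_of_nonneg (erfc_nonneg _)]
        exact erfc_sqrt_le_one _)
    calc ∫ ω, erfc √(Y ω / (X ω + C)) ∂μ
        = ∫ p, erfc √(p.1 / (p.2 + C)) ∂(μ.map fun ω => (Y ω, X ω)) :=
          (integral_map (hY.prodMk hX).aemeasurable hmeas.aestronglyMeasurable).symm
      _ = ∫ x, ∫ y, erfc √(y / (x + C)) ∂(expMeasure 1) ∂(μ.map X) := by
          rw [hprod, integral_prod_symm _ hint]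
      _ = ∫ ω, ∫ y, erfc √(y / (X ω + C)) ∂(expMeasure 1) ∂μ :=
          integral_map hX.aemeasurable
            (hmeas.stronglyMeasurable.integral_prod_left').aestronglyMeasurable
      _ = ∫ ω, (1 - 1 / √(1 + (X ω + C))) ∂μ :=
          integral_congr_ae (Filter.Eventually.of_forall fun ω => integral_erfc_sqrt_div (hpos ω))
  have hrhs : ∫ z in Set.Ioi (0:ℝ),
      z ^ (-(1/2) : ℝ) * Real.exp (-z * (1 + C)) * ∫ ω, Real.exp (-z * X ω) ∂μ =
      √π * ∫ ω, 1 / √(1 + (X ω + C)) ∂μ := by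
    have hb : IntegrableOn (fun z : ℝ => z ^ (-(1/2) : ℝ) * Real.exp (-z * (1 + C)))
        (Set.Ioi 0) := by
      have h := integrableOn_rpow_mul_exp_neg_mul_rpow (p := 1) (s := -(1/2)) (b := 1 + C)
        (by norm_num) one_pos (by positivity)
      refine h.congr_fun (fun z _ => ?_) measurableSet_Ioi
      simp only [Real.rpow_one]
      ring_nf
    -- The integrand is dominated by its value at `X = 0`.
    have hint : Integrable (Function.uncurry fun (z : ℝ) (ω : Ω) =>
        z ^ (-(1/2) : ℝ) * Real.exp (-z * (1 + C)) * Real.exp (-z * X ω))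
        ((volume.restrict (Set.Ioi (0:ℝ))).prod μ) := by
      refine (hb.mul_prod (integrable_const (1:ℝ))).mono
        (Measurable.aestronglyMeasurable (by unfold Function.uncurry; fun_prop)) ?_
      have hz : ∀ᵐ p ∂((volume.restrict (Set.Ioi (0:ℝ))).prod μ), p.1 ∈ Set.Ioi (0:ℝ) :=
        Measure.quasiMeasurePreserving_fst.ae (ae_restrict_mem measurableSet_Ioi)
      filter_upwards [hz] with p hp
      simp only [Function.uncurry, norm_mul]
      refine mul_le_mul_of_nonneg_left ?_ (by positivity)
      rw [norm_one, Real.norm_of_nonneg (Real.exp_pos _).le, Real.exp_le_one_iff, neg_mul]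
      exact neg_nonpos.2 (mul_nonneg (le_of_lt hp) (hXnonneg _))
    simp_rw [← integral_const_mul]
    rw [integral_integral_swap hint]
    refine integral_congr_ae (Filter.Eventually.of_forall fun ω => ?_)
    simp only
    rw [← integral_rpow_neg_half_mul_exp (b := 1 + (X ω + C)) (by linarith [hpos ω])]
    refine integral_congr_ae (Filter.Eventually.of_forall fun z => ?_)
    simp only
    rw [mul_assoc, ← Real.exp_add]
    ring_nf
  have hinv : Integrable (fun ω => 1 / √(1 + (X ω + C))) μ :=
    Integrable.of_bound (Measurable.aestronglyMeasurable (by fun_prop)) 1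
      (Filter.Eventually.of_forall fun ω => by
        rw [Real.norm_of_nonneg (by positivity)]
        exact div_le_one_of_le₀ (Real.one_le_sqrt.2 (by linarith [hpos ω])) (by positivity))
  have hp : √π ≠ 0 := by positivity
  rw [hlhs, hrhs, integral_sub (integrable_const 1) hinv]
  simp only [integral_const, probReal_univ, one_smul]
  field_simp
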